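/- Let p ≥ 5 be a prime. Then the Dedekind–Rademacher sum s(p², 6p+1; (12p+1)/(12p+2), −1/2) equals 1/2 if p = 5, equals (−p² + 114p + 199)/(24(6p+1)) if p ≡ 1 (mod 4) and p ≠ 5, and equals (−p² − 102p + 163)/(24(6p+1)) if p ≡ 3 (mod 4). -/

import Mathlib

open Real
open scoped Classical

/-- The generalized sawtooth function `((x))`. -/
noncomputable def saw (x : ℝ) : ℝ :=
  if ∃ m : ℤ, x = m then 0 else Int.fract x - 1 / 2

/-- The Dedekind–Rademacher sum
`s(b,a;x,y) = ∑_{k=0}^{|a|−1} ((x + (b/a)(k+y))) (((k+y)/a))`. -/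
noncomputable def dedekindRademacher (b a : ℤ) (x y : ℝ) : ℝ :=
  ∑ k ∈ Finset.range a.natAbs,
    saw (x + (b : ℝ) / (a : ℝ) * ((k : ℝ) + y)) * saw (((k : ℝ) + y) / (a : ℝ))

/-!
Put `a = 6p + 1`. Two symmetries collapse the sum to one over 36 terms. Since `36p² ≡ 1 (mod a)`,
reindexing by multiplication by `36` turns `s(p²,a;1-1/(2a),-1/2)` into `s(36,a;18/a+1/2,0)`.
Rademacher's reciprocity law trades this for `s(a,36;0,18/a+1/2)`. As soon as `36 < a`, which
excludes exactly `p = 5`, the points `(m+18/a+1/2)/36` stay in `(0,1)`, where the sawtooth is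
linear, so the sum depends on `a` only modulo `72`, that is, on `p` only modulo `12`.

Reciprocity follows by summing, over `u = (k+y)/a` and `v = (l+x)/b`, the three-term relation that
expresses `((u))((v)) - (((u)) + ((v)))((u+v))` through the Bernoulli polynomial `B₂` at the
fractional parts of `u`, `v` and `u + v`.
-/

lemma saw_eq_ite_fract (x : ℝ) :
    saw x = if Int.fract x = 0 then 0 else Int.fract x - 1 / 2 := by
  have h : (∃ m : ℤ, x = m) ↔ Int.fract x = 0 := by
    simp only [Int.fract_eq_zero_iff, Set.mem_range, eq_comm]
  simp only [saw, h]

lemma saw_eq_fract_sub_fract_neg (x : ℝ) : saw x = (Int.fract x - Int.fract (-x)) / 2 := by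
  rw [saw_eq_ite_fract]
  split_ifs with h
  · rw [h, Int.fract_neg_eq_zero.2 h]
    norm_num
  · rw [Int.fract_neg h]
    ring

lemma saw_add_intCast (x : ℝ) (n : ℤ) : saw (x + n) = saw x := by
  simp only [saw_eq_ite_fract, Int.fract_add_intCast]

lemma periodic_saw : Function.Periodic saw 1 := fun x ↦ by
  rw [← Int.cast_one, saw_add_intCast]

lemma saw_of_mem_Ioo {x : ℝ} (hx : x ∈ Set.Ioo 0 1) : saw x = x - 1 / 2 := by
  rw [saw_eq_ite_fract, Int.fract_eq_self.2 ⟨hx.1.le, hx.2⟩, if_neg hx.1.ne']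

lemma fract_add_eq_or (x y : ℝ) :
    Int.fract (x + y) = Int.fract x + Int.fract y ∨
      Int.fract (x + y) = Int.fract x + Int.fract y - 1 := by
  obtain ⟨z, hz⟩ := Int.fract_add x y
  have lower : (-2 : ℝ) < z := by
    linarith [Int.fract_nonneg (x + y), Int.fract_lt_one x, Int.fract_lt_one y]
  have upper : (z : ℝ) < 1 := by
    linarith [Int.fract_lt_one (x + y), Int.fract_nonneg x, Int.fract_nonneg y]
  have lower' : -2 < z := mod_cast lower
  have upper' : z < 1 := mod_cast upper
  obtain rfl | rfl : z = 0 ∨ z = -1 := by omega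
  · left
    push_cast at hz
    linarith
  · right
    push_cast at hz
    linarith

-- Off the integers this expands `({x} + {y} - {x + y} - 1 / 2) ^ 2 = 1 / 4`.
theorem saw_mul_saw_sub_add_mul_saw_add {x y : ℝ} (h : Int.fract x ≠ 0 ∨ Int.fract y ≠ 0) :
    saw x * saw y - (saw x + saw y) * saw (x + y) =
      -(bernoulliFun 2 (Int.fract x) + bernoulliFun 2 (Int.fract y) +
        bernoulliFun 2 (Int.fract (x + y))) / 2 := by
  have := Int.fract_nonneg x
  have := Int.fract_lt_one x
  have := Int.fract_nonneg y
  have := Int.fract_lt_one y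
  have := Int.fract_nonneg (x + y)
  have := Int.fract_lt_one (x + y)
  simp only [saw_eq_ite_fract, bernoulliFun_two]
  rcases fract_add_eq_or x y with hxy | hxy <;> split_ifs <;> grind

theorem periodic_sum_add_div {f : ℝ → ℝ} (hf : Function.Periodic f 1) {n : ℕ} (hn : n ≠ 0) :
    Function.Periodic (fun t ↦ ∑ k ∈ Finset.range n, f ((t + k) / n)) 1 := by
  intro t
  have shift (k : ℕ) : f ((t + 1 + k) / n) = f ((t + (k + 1 : ℕ)) / n) := by
    push_cast
    ring_nf
  have wrap : f ((t + n) / n) = f ((t + (0 : ℕ)) / n) := by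
    rw [add_div, div_self (mod_cast hn), hf, Nat.cast_zero, add_zero]
  simp only [shift]
  linarith [Finset.sum_range_succ (fun k : ℕ ↦ f ((t + k) / n)) n,
    Finset.sum_range_succ' (fun k : ℕ ↦ f ((t + k) / n)) n]

theorem sum_bernoulliFun_fract_add_div (j : ℕ) {n : ℕ} (hn : n ≠ 0) (t : ℝ) :
    ∑ k ∈ Finset.range n, bernoulliFun j (Int.fract ((t + k) / n)) =
      n / n ^ j * bernoulliFun j (Int.fract t) := by
  have hn' : (0 : ℝ) < n := by positivity
  have reduce := (periodic_sum_add_div (f := fun x ↦ bernoulliFun j (Int.fract x))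
    (fun x ↦ by simp only [Int.fract_add_one]) hn).sub_int_mul_eq (x := t) ⌊t⌋
  simp only [mul_one, Int.self_sub_floor] at reduce
  rw [← reduce]
  have fract_eq : ∀ k ∈ Finset.range n,
      bernoulliFun j (Int.fract ((Int.fract t + k) / n)) =
        bernoulliFun j (Int.fract t / n + k / n) := by
    intro k hk
    have hk' : (k : ℝ) + 1 ≤ n := mod_cast Finset.mem_range.1 hk
    rw [Int.fract_eq_self.2 ⟨by positivity, ?_⟩, add_div]
    rw [div_lt_one hn']
    linarith [Int.fract_lt_one t]
  rw [Finset.sum_congr rfl fract_eq]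
  have multiplication := bernoulliFun_mul j hn (Int.fract t / n)
  rw [mul_div_cancel₀ _ hn'.ne'] at multiplication
  rw [multiplication]
  field_simp

theorem sum_saw_add_div {n : ℕ} (hn : n ≠ 0) (t : ℝ) :
    ∑ k ∈ Finset.range n, saw ((t + k) / n) = saw t := by
  have distribution (s : ℝ) := sum_bernoulliFun_fract_add_div 1 hn s
  have reflect : ∑ k ∈ Finset.range n, Int.fract (-((t + k) / n)) =
      ∑ k ∈ Finset.range n, Int.fract ((1 - t + k) / n) := by
    rw [← Finset.sum_range_reflect]
    refine Finset.sum_congr rfl fun k hk ↦ ?_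
    rw [← Int.fract_add_one, Nat.sub_sub, Nat.cast_sub (by have := Finset.mem_range.1 hk; omega)]
    congr 1
    push_cast
    field_simp
    ring
  have hfract : Int.fract (1 - t) = Int.fract (-t) := by
    rw [sub_eq_neg_add, Int.fract_add_one]
  simp only [bernoulliFun_one, Finset.sum_sub_distrib, pow_one, ne_eq, Nat.cast_eq_zero, hn,
    not_false_eq_true, div_self, one_mul] at distribution
  simp only [saw_eq_fract_sub_fract_neg, ← Finset.sum_div, Finset.sum_sub_distrib, reflect]
  linarith [distribution t, distribution (1 - t)]

theorem sum_range_comp_mul_add {M : Type*} [AddCommMonoid M] {n : ℕ} {F : ℤ → M}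
    (hF : Function.Periodic F n) {c : ℤ} (hc : IsCoprime c n) (d : ℤ) :
    ∑ k ∈ Finset.range n, F (c * k + d) = ∑ k ∈ Finset.range n, F k := by
  rcases n.eq_zero_or_pos with rfl | hn
  · simp
  have : NeZero n := ⟨hn.ne'⟩
  have F_cast (m : ℤ) : F ((m : ZMod n).val) = F m := by
    have := hF.sub_int_mul_eq (x := m) (m / n)
    rwa [Int.cast_id, mul_comm, ← Int.emod_def, ← ZMod.val_intCast] at this
  have sum_eq (G : ZMod n → M) : ∑ k ∈ Finset.range n, G k = ∑ r, G r := by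
    refine Finset.sum_nbij' (fun k ↦ (k : ZMod n)) ZMod.val (fun _ _ ↦ Finset.mem_univ _)
      (fun r _ ↦ Finset.mem_range.2 r.val_lt)
      (fun k hk ↦ ZMod.val_cast_of_lt (Finset.mem_range.1 hk)) (fun r _ ↦ ZMod.natCast_zmod_val r)
      (fun _ _ ↦ rfl)
  have hc' : IsUnit (c : ZMod n) := by
    simpa [isCoprime_zero_right] using hc.map (Int.castRingHom (ZMod n))
  have bij : Function.Bijective fun r : ZMod n ↦ (c : ZMod n) * r + d :=
    (AddGroup.addRight_bijective (d : ZMod n)).comp (hc'.unit.mulLeft_bijective)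
  calc ∑ k ∈ Finset.range n, F (c * k + d)
      = ∑ k ∈ Finset.range n, F ((c * k + d : ZMod n)).val := by
        refine Finset.sum_congr rfl fun k _ ↦ ?_
        rw [← F_cast]
        push_cast
        rfl
    _ = ∑ r : ZMod n, F (c * r + d : ZMod n).val := sum_eq fun r ↦ F (c * r + d : ZMod n).val
    _ = ∑ r : ZMod n, F r.val := bij.sum_comp fun r ↦ F r.val
    _ = ∑ k ∈ Finset.range n, F k := by
        rw [← sum_eq fun r ↦ F r.val]
        exact Finset.sum_congr rfl fun k _ ↦ mod_cast F_cast k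

theorem sum_range_comp_add_mul_add_div {f : ℝ → ℝ} (hf : Function.Periodic f 1) {n : ℕ}
    (hn : n ≠ 0) {c : ℤ} (hc : IsCoprime c n) (t : ℝ) (d : ℤ) :
    ∑ k ∈ Finset.range n, f ((t + (c * k + d)) / n) = ∑ k ∈ Finset.range n, f ((t + k) / n) := by
  have periodic : Function.Periodic (fun k : ℤ ↦ f ((t + k) / n)) n := by
    intro k
    have shift : (t + (k + n : ℤ)) / n = (t + k) / n + 1 := by
      push_cast
      field_simp
      ring
    simp only [shift, hf _]
  exact_mod_cast sum_range_comp_mul_add periodic hc d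

lemma dedekindRademacher_natCast_eq_sum (b : ℤ) (a : ℕ) (x y : ℝ) :
    dedekindRademacher b a x y =
      ∑ k ∈ Finset.range a, saw ((y + k) / a) * saw (x + b * ((y + k) / a)) := by
  simp only [dedekindRademacher, Int.natAbs_natCast, Int.cast_natCast]
  refine Finset.sum_congr rfl fun k _ ↦ ?_
  rw [mul_comm, add_comm y, div_mul_eq_mul_div, mul_div_assoc]

theorem dedekindRademacher_add_intCast_left (b a : ℤ) (x y : ℝ) (n : ℤ) :
    dedekindRademacher b a (x + n) y = dedekindRademacher b a x y := by
  have comm (t : ℝ) : x + n + t = x + t + n := add_right_comm x n t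
  simp only [dedekindRademacher, comm, saw_add_intCast]

theorem dedekindRademacher_eq_sum_comp_mul_add (b : ℤ) {a : ℕ} (ha : a ≠ 0) (x y : ℝ) {c : ℤ}
    (hc : IsCoprime c a) (d : ℤ) :
    dedekindRademacher b a x y =
      ∑ k ∈ Finset.range a,
        saw ((y + (c * k + d)) / a) * saw (x + b * ((y + (c * k + d)) / a)) := by
  have periodic : Function.Periodic (fun u ↦ saw u * saw (x + b * u)) 1 := by
    intro u
    simp only [mul_add, mul_one, ← add_assoc, saw_add_intCast, periodic_saw u]
  rw [dedekindRademacher_natCast_eq_sum]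
  exact (sum_range_comp_add_mul_add_div periodic ha hc y d).symm

theorem dedekindRademacher_eq_of_mul_modEq_one {a : ℕ} (ha : a ≠ 0) {b c : ℤ}
    (hbc : b * c ≡ 1 [ZMOD a]) {x y : ℝ} {z : ℤ} (hz : a * x + b * y = z) :
    dedekindRademacher b a x y = dedekindRademacher c a ((y - c * z) / a) 0 := by
  obtain ⟨m, hm⟩ := hbc.dvd
  have coprime : IsCoprime c (a : ℤ) := ⟨b, m, by linarith⟩
  have hm' : (1 : ℝ) - b * c = a * m := mod_cast hm
  rw [dedekindRademacher_eq_sum_comp_mul_add b ha x y coprime (-c * z),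
    dedekindRademacher_natCast_eq_sum]
  refine Finset.sum_congr rfl fun j _ ↦ ?_
  have left_arg : (y + (c * j + (-c * z : ℤ))) / a = (y - c * z) / a + c * ((0 + j) / a) := by
    push_cast
    ring
  have right_arg : x + b * ((y + (c * j + (-c * z : ℤ))) / a) =
      (0 + j) / a + (-(m * (j - z)) : ℤ) := by
    push_cast
    field_simp
    linear_combination hz - (j - z) * hm'
  rw [right_arg, left_arg, saw_add_intCast, mul_comm]

theorem sum_sum_saw_mul_saw_add (a : ℕ) {b : ℕ} (hb : b ≠ 0) (x y : ℝ) :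
    ∑ k ∈ Finset.range a, ∑ l ∈ Finset.range b,
      saw ((y + k) / a) * saw ((y + k) / a + (x + l) / b) = dedekindRademacher b a x y := by
  rw [dedekindRademacher_natCast_eq_sum]
  refine Finset.sum_congr rfl fun k _ ↦ ?_
  rw [← Finset.mul_sum, Int.cast_natCast, ← sum_saw_add_div hb (x + b * ((y + k) / a))]
  congr 1
  refine Finset.sum_congr rfl fun l _ ↦ ?_
  congr 1
  field_simp
  ring

theorem sum_sum_bernoulliFun_fract_add (j : ℕ) {a b : ℕ} (ha : a ≠ 0) (hb : b ≠ 0)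
    (hab : a.Coprime b) (x y : ℝ) :
    ∑ k ∈ Finset.range a, ∑ l ∈ Finset.range b,
      bernoulliFun j (Int.fract ((y + k) / a + (x + l) / b)) =
      a * b / (a * b) ^ j * bernoulliFun j (Int.fract (a * x + b * y)) := by
  have inner (k : ℕ) : ∑ l ∈ Finset.range b,
      bernoulliFun j (Int.fract ((y + k) / a + (x + l) / b)) =
      b / b ^ j * bernoulliFun j (Int.fract ((a * x + b * y + (b * k + (0 : ℤ))) / a)) := by
    have merge : (a * x + b * y + (b * k + (0 : ℤ))) / a = b * ((y + k) / a) + x := by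
      push_cast
      field_simp
      ring
    rw [merge, ← sum_bernoulliFun_fract_add_div j hb]
    refine Finset.sum_congr rfl fun l _ ↦ ?_
    congr 2
    field_simp
    ring
  have outer := sum_range_comp_add_mul_add_div
    (f := fun u ↦ bernoulliFun j (Int.fract u)) (fun u ↦ by simp only [Int.fract_add_one])
    ha hab.symm.isCoprime (a * x + b * y) 0
  simp only [Int.cast_natCast] at outer
  rw [Finset.sum_congr rfl fun k _ ↦ inner k, ← Finset.mul_sum, outer,
    sum_bernoulliFun_fract_add_div j ha, mul_pow]
  field_simp

lemma fract_add_natCast_div_ne_zero {n : ℕ} (hn : n ≠ 0) (k : ℕ) {t : ℝ}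
    (ht : Int.fract t ≠ 0) : Int.fract ((t + k) / n) ≠ 0 := by
  contrapose! ht
  obtain ⟨m, hm⟩ := Int.fract_eq_zero_iff.1 ht
  refine Int.fract_eq_zero_iff.2 ⟨n * m - k, ?_⟩
  push_cast
  rw [hm]
  field_simp
  ring

theorem dedekindRademacher_reciprocity {a b : ℕ} (ha : a ≠ 0) (hb : b ≠ 0)
    (hab : a.Coprime b) {x y : ℝ} (hxy : Int.fract x ≠ 0 ∨ Int.fract y ≠ 0) :
    dedekindRademacher b a x y + dedekindRademacher a b y x =
      saw x * saw y + (a / b * bernoulliFun 2 (Int.fract x) +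
        b / a * bernoulliFun 2 (Int.fract y) +
        1 / (a * b) * bernoulliFun 2 (Int.fract (a * x + b * y))) / 2 := by
  have three_term (k l : ℕ) :
      saw ((y + k) / a) * saw ((x + l) / b) =
        saw ((y + k) / a) * saw ((y + k) / a + (x + l) / b) +
        saw ((x + l) / b) * saw ((x + l) / b + (y + k) / a) -
        (bernoulliFun 2 (Int.fract ((y + k) / a)) + bernoulliFun 2 (Int.fract ((x + l) / b)) +
          bernoulliFun 2 (Int.fract ((y + k) / a + (x + l) / b))) / 2 := by
    rw [add_comm ((x + l) / b)]
    linarith [saw_mul_saw_sub_add_mul_saw_add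
      (hxy.symm.imp (fract_add_natCast_div_ne_zero ha k) (fract_add_natCast_div_ne_zero hb l))]
  have swapped := sum_sum_saw_mul_saw_add b ha y x
  rw [Finset.sum_comm] at swapped
  have product : saw x * saw y = ∑ k ∈ Finset.range a, ∑ l ∈ Finset.range b,
      saw ((y + k) / a) * saw ((x + l) / b) := by
    rw [← Finset.sum_mul_sum, sum_saw_add_div ha, sum_saw_add_div hb, mul_comm]
  simp only [product, three_term, Finset.sum_sub_distrib, Finset.sum_add_distrib,
    ← Finset.sum_div, sum_sum_saw_mul_saw_add a hb, swapped,
    sum_sum_bernoulliFun_fract_add 2 ha hb hab]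
  simp only [Finset.sum_const, Finset.card_range, nsmul_eq_mul, ← Finset.mul_sum,
    sum_bernoulliFun_fract_add_div 2 ha, sum_bernoulliFun_fract_add_div 2 hb]
  field_simp
  ring

/-- The sum `∑ ((2m+1)/(2b)) ((a(2m+1)/(2b) + 1/2))` over `0 ≤ m < b`, to which reciprocity
reduces `s(b,a;b/(2a)+1/2,0)`; the linear factor is the odd multiple of `1/(2b)` itself, not
its sawtooth. -/
noncomputable def oddSawtoothSum (b : ℕ) (a : ℤ) : ℝ :=
  ∑ m ∈ Finset.range b, (2 * m + 1) / (2 * b) * saw (a * ((2 * m + 1) / (2 * b)) + 1 / 2)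

lemma fract_intCast_div_two_of_odd {n : ℤ} (hn : Odd n) : Int.fract ((n : ℝ) / 2) = 1 / 2 := by
  obtain ⟨m, rfl⟩ := hn
  have split : ((2 * m + 1 : ℤ) : ℝ) / 2 = m + 1 / 2 := by
    push_cast
    ring
  rw [split, Int.fract_intCast_add]
  exact Int.fract_eq_self.2 ⟨by norm_num, by norm_num⟩

lemma saw_intCast_div_two_of_odd {n : ℤ} (hn : Odd n) : saw ((n : ℝ) / 2) = 0 := by
  rw [saw_eq_ite_fract, fract_intCast_div_two_of_odd hn]
  norm_num

lemma sum_saw_odd_mul_div_add_half {a b : ℕ} (hb : b ≠ 0) (hab : a.Coprime b)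
    (hodd : Odd (a + b)) :
    ∑ m ∈ Finset.range b, saw (a * ((2 * m + 1) / (2 * b)) + 1 / 2) = 0 := by
  have odd_cast : Odd ((a + b : ℕ) : ℤ) := mod_cast hodd
  have sum_eq_zero := sum_range_comp_add_mul_add_div periodic_saw hb hab.isCoprime
    (((a + b : ℕ) : ℤ) / 2) 0
  rw [sum_saw_add_div hb, saw_intCast_div_two_of_odd odd_cast] at sum_eq_zero
  rw [← sum_eq_zero]
  refine Finset.sum_congr rfl fun m _ ↦ ?_
  congr 1
  push_cast
  field_simp
  ring

lemma div_two_mul_add_half_mem_Ioo {a b : ℕ} (hb : b ≠ 0) (hba : b < a) :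
    (b / (2 * a) + 1 / 2 : ℝ) ∈ Set.Ioo 0 1 := by
  have hb' : (0 : ℝ) < b := by positivity
  have hba' : (b : ℝ) < a := mod_cast hba
  have lt_half : (b / (2 * a) : ℝ) < 1 / 2 := by
    rw [div_lt_div_iff₀ (by linarith) two_pos]
    linarith
  exact ⟨by positivity, by linarith⟩

theorem dedekindRademacher_zero_div_add_half {a b : ℕ} (hb : b ≠ 0) (hba : b < a)
    (hab : a.Coprime b) (hodd : Odd (a + b)) :
    dedekindRademacher a b 0 (b / (2 * a) + 1 / 2) = oddSawtoothSum b a := by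
  have hb' : (0 : ℝ) < b := by positivity
  have ha' : (0 : ℝ) < a := hb'.trans (mod_cast hba)
  have offset_lt_one := (div_two_mul_add_half_mem_Ioo hb hba).2
  have linear_factor : ∀ m ∈ Finset.range b,
      saw ((b / (2 * a) + 1 / 2 + m) / b) = (2 * m + 1) / (2 * b) + (1 / (2 * a) - 1 / 2) := by
    intro m hm
    have hm' : (m : ℝ) + 1 ≤ b := mod_cast Finset.mem_range.1 hm
    have mem_Ioo : (b / (2 * a) + 1 / 2 + m : ℝ) / b ∈ Set.Ioo 0 1 :=
      ⟨by positivity, (div_lt_one hb').2 (by linarith)⟩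
    rw [saw_of_mem_Ioo mem_Ioo]
    field_simp
    ring
  have sawtooth_factor (m : ℕ) : saw (0 + a * ((b / (2 * a) + 1 / 2 + m) / b)) =
      saw (a * ((2 * m + 1) / (2 * b)) + 1 / 2) := by
    congr 1
    field_simp
    ring
  simp only [dedekindRademacher_natCast_eq_sum, oddSawtoothSum, Int.cast_natCast, sawtooth_factor]
  rw [Finset.sum_congr rfl fun m hm ↦ by rw [linear_factor m hm, add_mul],
    Finset.sum_add_distrib, ← Finset.mul_sum, sum_saw_odd_mul_div_add_half hb hab hodd,
    mul_zero, add_zero]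

theorem dedekindRademacher_div_add_half {a b : ℕ} (hb : b ≠ 0) (hba : b < a)
    (hab : a.Coprime b) (hodd : Odd (a + b)) :
    dedekindRademacher b a (b / (2 * a) + 1 / 2) 0 =
      (5 * b ^ 2 - a ^ 2 - 1) / (24 * a * b) - oddSawtoothSum b a := by
  have hb' : (0 : ℝ) < b := by positivity
  have ha' : (0 : ℝ) < a := hb'.trans (mod_cast hba)
  obtain ⟨offset_pos, offset_lt_one⟩ := div_two_mul_add_half_mem_Ioo hb hba
  have fract_offset : Int.fract (b / (2 * a) + 1 / 2 : ℝ) = b / (2 * a) + 1 / 2 :=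
    Int.fract_eq_self.2 ⟨offset_pos.le, offset_lt_one⟩
  have fract_combination : Int.fract (a * (b / (2 * a) + 1 / 2) + b * 0 : ℝ) = 1 / 2 := by
    have eq_half : (a * (b / (2 * a) + 1 / 2) + b * 0 : ℝ) = ((a + b : ℕ) : ℤ) / 2 := by
      push_cast
      field_simp
      ring
    rw [eq_half, fract_intCast_div_two_of_odd (mod_cast hodd)]
  have reciprocity := dedekindRademacher_reciprocity (y := 0) (by omega) hb hab
    (Or.inl (fract_offset ▸ offset_pos.ne'))
  have saw_zero : saw 0 = 0 := by rw [saw_eq_ite_fract, Int.fract_zero, if_pos rfl]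
  rw [dedekindRademacher_zero_div_add_half hb hba hab hodd, fract_offset, fract_combination,
    saw_zero, Int.fract_zero] at reciprocity
  simp only [bernoulliFun_two] at reciprocity
  rw [eq_sub_iff_add_eq, reciprocity]
  field_simp
  ring

theorem oddSawtoothSum_congr {b : ℕ} (hb : b ≠ 0) {a a' : ℤ} (h : a ≡ a' [ZMOD (2 * b : ℕ)]) :
    oddSawtoothSum b a = oddSawtoothSum b a' := by
  obtain ⟨t, ht⟩ := h.dvd
  obtain rfl : a' = a + (2 * b : ℕ) * t := by linarith
  refine Finset.sum_congr rfl fun m _ ↦ ?_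
  have shift : ((a + (2 * b : ℕ) * t : ℤ) * ((2 * m + 1) / (2 * b)) + 1 / 2 : ℝ) =
      a * ((2 * m + 1) / (2 * b)) + 1 / 2 + (t * (2 * m + 1) : ℤ) := by
    push_cast
    field_simp
    ring
  rw [shift, saw_add_intCast]

/-- The integer `2n((u/n))`, for exact evaluation of sawtooth sums at rational points. -/
def sawNumerator (n : ℕ) (u : ℤ) : ℤ :=
  if u % n = 0 then 0 else 2 * (u % n) - n

lemma saw_intCast_div {n : ℕ} (hn : n ≠ 0) (u : ℤ) :
    saw ((u : ℝ) / n) = sawNumerator n u / (2 * n) := by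
  have hn' : (n : ℝ) ≠ 0 := mod_cast hn
  rw [saw_eq_ite_fract, Int.fract_div_intCast_eq_div_intCast_mod, sawNumerator]
  simp only [div_eq_zero_iff, hn', or_false, Int.cast_eq_zero]
  split_ifs
  · simp
  · push_cast
    field_simp

lemma oddSawtoothSum_eq_sum_sawNumerator {b : ℕ} (hb : b ≠ 0) (a : ℤ) :
    oddSawtoothSum b a =
      (∑ m ∈ Finset.range b, (2 * m + 1) * sawNumerator (2 * b) (a * (2 * m + 1) + b) : ℤ) /
        (8 * b ^ 2) := by
  rw [oddSawtoothSum, Int.cast_sum, Finset.sum_div]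
  refine Finset.sum_congr rfl fun m _ ↦ ?_
  have common_denominator : (a * ((2 * m + 1) / (2 * b)) + 1 / 2 : ℝ) =
      (a * (2 * m + 1) + b : ℤ) / (2 * b : ℕ) := by
    push_cast
    field_simp
  rw [common_denominator, saw_intCast_div (by omega)]
  push_cast
  field_simp
  ring

lemma oddSawtoothSum_thirtySix {p : ℕ} (hp : p.Coprime 6) :
    oddSawtoothSum 36 (6 * p + 1) = if p % 4 = 1 then -343 / 432 else 305 / 432 := by
  have sum_of_lt_twelve : ∀ r < 12, Nat.Coprime r 6 →
      ∑ m ∈ Finset.range 36, (2 * m + 1 : ℤ) * sawNumerator 72 ((6 * r + 1) * (2 * m + 1) + 36) =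
        if r % 4 = 1 then -8232 else 7320 := by
    decide
  have coprime : (p % 12).Coprime 6 := by
    rw [← Nat.mod_add_div p 12, show 12 * (p / 12) = 6 * (2 * (p / 12)) by ring] at hp
    exact (Nat.coprime_add_mul_left_left _ _ _).1 hp
  have residue : (6 * p + 1 : ℤ) ≡ 6 * (p % 12 : ℕ) + 1 [ZMOD 72] := by
    simp only [Int.ModEq]
    omega
  rw [oddSawtoothSum_congr (by decide) residue, oddSawtoothSum_eq_sum_sawNumerator (by decide),
    Nat.cast_ofNat, sum_of_lt_twelve _ (Nat.mod_lt p (by decide)) coprime,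
    Nat.mod_mod_of_dvd p (by decide)]
  split_ifs <;> norm_num

theorem dedekindRademacher_sq_eq_dedekindRademacher_thirtySix {p : ℕ} (hp : Odd p) :
    dedekindRademacher ((p : ℤ) ^ 2) (6 * (p : ℤ) + 1)
        ((12 * (p : ℝ) + 1) / (12 * (p : ℝ) + 2)) (-1 / 2) =
      dedekindRademacher 36 (6 * p + 1 : ℕ) (36 / (2 * (6 * p + 1 : ℕ)) + 1 / 2) 0 := by
  obtain ⟨q, rfl⟩ := hp
  set p := 2 * q + 1 with hpq
  have inverse : (p : ℤ) ^ 2 * 36 ≡ 1 [ZMOD (6 * p + 1 : ℕ)] :=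
    Int.modEq_iff_dvd.2 ⟨1 - 6 * p, by push_cast; ring⟩
  have integral : ((6 * p + 1 : ℕ) : ℝ) * ((12 * p + 1) / (12 * p + 2)) +
      ((p : ℤ) ^ 2 : ℤ) * (-1 / 2) = (10 * q + 6 - 2 * q ^ 2 : ℤ) := by
    rw [hpq]
    push_cast
    field_simp
    ring
  have shift : ((-1 / 2 - (36 : ℤ) * (10 * q + 6 - 2 * q ^ 2 : ℤ)) / (6 * p + 1 : ℕ) : ℝ) =
      36 / (2 * (6 * p + 1 : ℕ)) + 1 / 2 + (3 * p - 37 : ℤ) := by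
    rw [hpq]
    push_cast
    field_simp
    ring
  have reindexed := dedekindRademacher_eq_of_mul_modEq_one (by omega) inverse integral
  rw [shift, dedekindRademacher_add_intCast_left] at reindexed
  exact_mod_cast reindexed

theorem dedekindRademacher_sq_eq_sub_oddSawtoothSum {p : ℕ} (hp : Odd p) (hp5 : 5 < p) :
    dedekindRademacher ((p : ℤ) ^ 2) (6 * (p : ℤ) + 1)
        ((12 * (p : ℝ) + 1) / (12 * (p : ℝ) + 2)) (-1 / 2) =
      (6479 - (6 * p + 1) ^ 2) / (864 * (6 * p + 1)) - oddSawtoothSum 36 (6 * p + 1) := by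
  have coprime : (6 * p + 1).Coprime 36 :=
    Nat.Coprime.pow_right 2 (show (6 * p + 1).Coprime 6 by simp)
  have odd : Odd (6 * p + 1 + 36) := ⟨3 * p + 18, by ring⟩
  have reciprocity := dedekindRademacher_div_add_half (by decide) (by omega) coprime odd
  rw [dedekindRademacher_sq_eq_dedekindRademacher_thirtySix hp]
  push_cast at reciprocity ⊢
  rw [reciprocity]
  field_simp
  ring

lemma dedekindRademacher_twentyFive_thirtyOne :
    dedekindRademacher 25 31 (61 / 62) (-1 / 2) = 1 / 2 := by
  have numerator : ∑ k ∈ Finset.range 31,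
      sawNumerator 62 (2 * k - 1) * sawNumerator 62 (50 * k + 36) = 7688 := by decide
  have summand (k : ℕ) :
      saw ((-1 / 2 + k) / (31 : ℕ)) * saw (61 / 62 + (25 : ℤ) * ((-1 / 2 + k) / (31 : ℕ))) =
        (sawNumerator 62 (2 * k - 1) * sawNumerator 62 (50 * k + 36) : ℤ) / 124 ^ 2 := by
    have left_arg : (-1 / 2 + k : ℝ) / (31 : ℕ) = (2 * k - 1 : ℤ) / (62 : ℕ) := by
      push_cast
      ring
    have right_arg : (61 / 62 + (25 : ℤ) * ((2 * k - 1 : ℤ) / (62 : ℕ)) : ℝ) =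
        (50 * k + 36 : ℤ) / (62 : ℕ) := by
      push_cast
      ring
    rw [left_arg, right_arg, saw_intCast_div (by decide), saw_intCast_div (by decide)]
    push_cast
    ring
  have expansion := dedekindRademacher_natCast_eq_sum 25 31 (61 / 62) (-1 / 2)
  rw [Finset.sum_congr rfl fun k _ ↦ summand k, ← Finset.sum_div, ← Int.cast_sum,
    numerator] at expansion
  exact expansion.trans (by norm_num)

theorem stmt_14_general (p : ℕ) (hp : p.Coprime 6) (hp5 : 5 ≤ p) :
    (p = 5 →
      dedekindRademacher ((p : ℤ) ^ 2) (6 * (p : ℤ) + 1)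
        ((12 * (p : ℝ) + 1) / (12 * (p : ℝ) + 2)) (-1 / 2) = 1 / 2) ∧
    (p % 4 = 1 → p ≠ 5 →
      dedekindRademacher ((p : ℤ) ^ 2) (6 * (p : ℤ) + 1)
        ((12 * (p : ℝ) + 1) / (12 * (p : ℝ) + 2)) (-1 / 2) =
      (-(p : ℝ) ^ 2 + 114 * (p : ℝ) + 199) / (24 * (6 * (p : ℝ) + 1))) ∧
    (p % 4 = 3 →
      dedekindRademacher ((p : ℤ) ^ 2) (6 * (p : ℤ) + 1)
        ((12 * (p : ℝ) + 1) / (12 * (p : ℝ) + 2)) (-1 / 2) =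
      (-(p : ℝ) ^ 2 - 102 * (p : ℝ) + 163) / (24 * (6 * (p : ℝ) + 1))) := by
  have odd : Odd p := Nat.coprime_two_right.1 (hp.coprime_dvd_right (by decide))
  refine ⟨?_, fun h hne ↦ ?_, fun h ↦ ?_⟩
  · rintro rfl
    convert dedekindRademacher_twentyFive_thirtyOne using 2 <;> norm_num
  · rw [dedekindRademacher_sq_eq_sub_oddSawtoothSum odd (by omega),
      oddSawtoothSum_thirtySix hp, if_pos h]
    field_simp
    ring
  · rw [dedekindRademacher_sq_eq_sub_oddSawtoothSum odd (by omega),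
      oddSawtoothSum_thirtySix hp, if_neg (by omega)]
    field_simp
    ring

/-- For a prime `p ≥ 5`: `s(p², 6p+1; (12p+1)/(12p+2), −1/2)` equals `1/2` if `p = 5`,
equals `(−p² + 114p + 199)/(24(6p+1))` if `p ≡ 1 (mod 4)` and `p ≠ 5`, and equals
`(−p² − 102p + 163)/(24(6p+1))` if `p ≡ 3 (mod 4)`. -/
theorem stmt_14 (p : ℕ) (hp : p.Prime) (hp5 : 5 ≤ p) :
    (p = 5 →
      dedekindRademacher ((p : ℤ) ^ 2) (6 * (p : ℤ) + 1)
        ((12 * (p : ℝ) + 1) / (12 * (p : ℝ) + 2)) (-1 / 2) = 1 / 2) ∧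
    (p % 4 = 1 → p ≠ 5 →
      dedekindRademacher ((p : ℤ) ^ 2) (6 * (p : ℤ) + 1)
        ((12 * (p : ℝ) + 1) / (12 * (p : ℝ) + 2)) (-1 / 2) =
      (-(p : ℝ) ^ 2 + 114 * (p : ℝ) + 199) / (24 * (6 * (p : ℝ) + 1))) ∧
    (p % 4 = 3 →
      dedekindRademacher ((p : ℤ) ^ 2) (6 * (p : ℤ) + 1)
        ((12 * (p : ℝ) + 1) / (12 * (p : ℝ) + 2)) (-1 / 2) =
      (-(p : ℝ) ^ 2 - 102 * (p : ℝ) + 163) / (24 * (6 * (p : ℝ) + 1))) :=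
  stmt_14_general p (Nat.Coprime.mul_right ((Nat.coprime_primes hp Nat.prime_two).2 (by omega))
    ((Nat.coprime_primes hp Nat.prime_three).2 (by omega))) hp5
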